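/- Let V be a finite index set, let β_v > 0, p_v > 0, λ_v > 0 for v ∈ V with Σ_{v∈V} β_v = 1, and set λ̄ = Σ_v β_v λ_v and ζ = Σ_v β_v p_v. Assume 0 < λ̄ < e^{−1}, ζ < γ̄(λ̄), and λ_v < p_v e^{−γ̲(λ̄)} for every v ∈ V. Let Q be a solution of the mean-field slotted-Aloha dynamical system started from the empty state (Q_{(v,k)}(0) = 1_{k=0} for all v), and let γ(τ) = Σ_v β_v p_v(1 − Q_{(v,0)}(τ)). Then γ(τ) ≤ γ̲(λ̄) for all τ ≥ 0, and the function f(τ) = γ̲(λ̄)e^{−γ̲(λ̄)} − γ(τ)e^{−γ(τ)} is nonnegative and satisfies ∫_0^∞ f(u) du < ∞. -/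

import Mathlib

/-!
Write `S_{v,k} = Σ_{j ≥ k} Q_{v,j}` for the tails of the class-`v` queue and
`ρ_v = lam_v / (p_v e^{-γlo}) < 1`.  The geometric tails `ρ_v ^ k` are stationary for the service
rates `p_v e^{-γlo}`, and `Σ_v β_v p_v ρ_v = γlo`.

* The tails started from the empty state stay below the stationary ones: `S_{v,k}(τ) ≤ ρ_v ^ k`
  (`tail_le_geometric`).  The family `ρ_v ^ k + ε e^{Kτ} (k + 1)` is a strict supersolution for `K`
  large, since the tail equations are cooperative and a bound `S_{v,1} - ρ_v ≤ 2 ε e^{Kτ}` keeps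
  `e^{-γ}` above `e^{-γlo}` up to a multiple of `ε e^{Kτ}`.  The factor `k + 1` and `S ≤ 1` reduce
  the search for a first crossing time to finitely many `k` (`pos_of_no_crossing`); then `ε → 0`.
  Taking `k = 1` and summing over `v` gives `γ ≤ γlo`, and `x ↦ x e^{-x}` increases on `[0, 1]`.
* Let `f = γlo e^{-γlo} - γ e^{-γ}`, where `γlo e^{-γlo} = Σ_v β_v lam_v`.  The truncated mean
  `Σ_v β_v Σ_{1 ≤ k ≤ N} S_{v,k}` is bounded by `Σ_v β_v / (1 - ρ_v)`, and its
  derivative is at least `f - Σ_v β_v lam_v ρ_v ^ N`.  Integrating over `[0, T]` and letting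
  `N → ∞` bounds `∫_0^T f` uniformly in `T` (`integral_le_bound`).
-/

open Filter Set Real

/-- `γ(τ) = Σ_v β_v p_v (1 − Q_{(v,0)}(τ))`. -/
noncomputable def gammaFn {V : Type*} [Fintype V] (β p : V → ℝ)
    (Q : V → ℕ → ℝ → ℝ) (τ : ℝ) : ℝ :=
  ∑ v, β v * p v * (1 - Q v 0 τ)

/-- A solution of the mean-field slotted-Aloha dynamical system: a family of
functions `Q v k : [0,∞) → [0,1]` summing to `1` over `k`, satisfying the
Kolmogorov ODEs on `[0,∞)`. -/
def IsMFSolution {V : Type*} [Fintype V] (β p lam : V → ℝ)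
    (Q : V → ℕ → ℝ → ℝ) : Prop :=
  (∀ v k τ, 0 ≤ τ → Q v k τ ∈ Set.Icc (0:ℝ) 1) ∧
  (∀ v τ, 0 ≤ τ → HasSum (fun k => Q v k τ) 1) ∧
  (∀ v k τ, 0 ≤ τ → HasDerivWithinAt (Q v k)
    (lam v * ((if k = 0 then 0 else Q v (k-1) τ) - Q v k τ)
      + p v * Real.exp (-(gammaFn β p Q τ)) *
        (Q v (k+1) τ - (if k = 0 then 0 else Q v k τ)))
    (Set.Ici (0:ℝ)) τ)

open scoped ENNReal

/-! ### A first-crossing principle -/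

open scoped Topology

/-- First-crossing principle: a family of differentiable functions on `[0, ∞)`, positive at `0` and,
apart from finitely many members, positive throughout, stays positive as soon as any member
vanishing at a positive time while all others are nonnegative has positive derivative there. -/
lemma pos_of_no_crossing {ι : Type*} (s : Finset ι) (g g' : ι → ℝ → ℝ)
    (hout : ∀ i, i ∉ s → ∀ τ, 0 ≤ τ → 0 < g i τ) (h0 : ∀ i, 0 < g i 0)
    (hd : ∀ i τ, 0 ≤ τ → HasDerivWithinAt (g i) (g' i τ) (Ici 0) τ)
    (hcross : ∀ i τ, 0 < τ → (∀ j, 0 ≤ g j τ) → g i τ = 0 → 0 < g' i τ) :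
    ∀ i τ, 0 ≤ τ → 0 < g i τ := by
  by_contra! hcon
  obtain ⟨i₀, t₀, ht₀, hi₀⟩ := hcon
  have hcont : ∀ i, ContinuousOn (g i) (Ici 0) := fun i τ hτ => (hd i τ hτ).continuousWithinAt
  set B : Set ℝ := ⋃ i ∈ s, (Ici 0 ∩ g i ⁻¹' Iic 0) with hB
  have hBc : IsClosed B := by
    apply Set.Finite.isClosed_biUnion s.finite_toSet
    intro i _
    exact (hcont i).preimage_isClosed_of_isClosed isClosed_Ici isClosed_Iic
  have hmem : ∀ i τ, 0 ≤ τ → g i τ ≤ 0 → τ ∈ B := by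
    intro i τ hτ hi
    have his : i ∈ s := by
      by_contra h
      exact absurd (hout i h τ hτ) (not_lt.2 hi)
    simp only [hB, mem_iUnion]
    exact ⟨i, his, hτ, hi⟩
  have hBb : BddBelow B := by
    refine ⟨0, ?_⟩
    intro τ hτ
    simp only [hB, mem_iUnion] at hτ
    obtain ⟨i, _, h, _⟩ := hτ
    exact h
  have hT := hBc.csInf_mem ⟨t₀, hmem i₀ t₀ ht₀ hi₀⟩ hBb
  set T := sInf B
  have hbefore : ∀ i τ, 0 ≤ τ → τ < T → 0 < g i τ := by
    intro i τ hτ hlt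
    by_contra h
    exact absurd (csInf_le hBb (hmem i τ hτ (not_lt.1 h))) (not_le.2 hlt)
  simp only [hB, mem_iUnion] at hT
  obtain ⟨i, _, hT0, hTi⟩ := hT
  simp only [mem_Ici, mem_preimage, mem_Iic] at hT0 hTi
  have hTpos : 0 < T := by
    rcases hT0.eq_or_lt with h | h
    · rw [← h] at hTi
      exact absurd (h0 i) (not_lt.2 hTi)
    · exact h
  have hev : ∀ᶠ τ in 𝓝[<] T, 0 ≤ τ ∧ τ < T := by
    filter_upwards [Ioo_mem_nhdsLT hTpos] with τ hτ
    exact ⟨hτ.1.le, hτ.2⟩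
  have hda : ∀ j, HasDerivAt (g j) (g' j T) T := fun j =>
    (hd j T hT0).hasDerivAt (Ici_mem_nhds hTpos)
  have hnn : ∀ j, 0 ≤ g j T := by
    intro j
    refine ge_of_tendsto (b := 0) (x := 𝓝[<] T)
      ((hda j).continuousAt.tendsto.mono_left nhdsWithin_le_nhds) ?_
    filter_upwards [hev] with τ hτ
    exact (hbefore j τ hτ.1 hτ.2).le
  have hz : g i T = 0 := le_antisymm hTi (hnn i)
  have hpos := hcross i T hTpos hnn hz
  -- The left slopes at the first crossing time are nonpositive.
  have hslope : Tendsto (slope (g i) T) (𝓝[<] T) (𝓝 (g' i T)) :=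
    (hda i).tendsto_slope.mono_left (nhdsWithin_mono _ fun x hx => ne_of_lt hx)
  have hle : g' i T ≤ 0 := by
    refine le_of_tendsto hslope ?_
    filter_upwards [hev] with τ hτ
    rw [slope_def_field, hz, sub_zero]
    exact div_nonpos_of_nonneg_of_nonpos (hbefore i τ hτ.1 hτ.2).le (by linarith [hτ.2])
  linarith

/-! ### Tail equations and the comparison with the geometric tails -/

/-- The tail mass `Σ_{j ≥ k} Q_{v,j}` of class `v`, written as `1 - Σ_{j < k} Q_{v,j}` so that it is
a finite sum of differentiable functions. -/
noncomputable def tailMass {V : Type*} (Q : V → ℕ → ℝ → ℝ) (v : V) (k : ℕ) (τ : ℝ) : ℝ :=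
  1 - ∑ j ∈ Finset.range k, Q v j τ

lemma tailMass_zero {V : Type*} {Q : V → ℕ → ℝ → ℝ} (v : V) (τ : ℝ) : tailMass Q v 0 τ = 1 := by
  simp [tailMass]

lemma tailMass_sub_succ {V : Type*} {Q : V → ℕ → ℝ → ℝ} (v : V) (k : ℕ)
    (τ : ℝ) :
    tailMass Q v k τ - tailMass Q v (k + 1) τ = Q v k τ := by
  simp only [tailMass, Finset.sum_range_succ]
  ring

/-- The time derivative of `tailMass`, expressed through the tail masses themselves. -/
noncomputable def tailDeriv {V : Type*} [Fintype V] (β p lam : V → ℝ) (Q : V → ℕ → ℝ → ℝ)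
    (v : V) (k : ℕ) (τ : ℝ) : ℝ :=
  match k with
  | 0 => 0
  | n + 1 => lam v * (tailMass Q v n τ - tailMass Q v (n + 1) τ)
      - p v * Real.exp (-(gammaFn β p Q τ)) * (tailMass Q v (n + 1) τ - tailMass Q v (n + 2) τ)

section Tails

variable {V : Type*} [Fintype V] {β p lam : V → ℝ} {Q : V → ℕ → ℝ → ℝ}

lemma tailMass_nonneg (hQ : IsMFSolution β p lam Q) (v : V) (k : ℕ) {τ : ℝ} (hτ : 0 ≤ τ) :
    0 ≤ tailMass Q v k τ := by
  have := sum_le_hasSum (Finset.range k) (fun j _ => (hQ.1 v j τ hτ).1) (hQ.2.1 v τ hτ)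
  simp only [tailMass]
  linarith

lemma tailMass_le_one (hQ : IsMFSolution β p lam Q) (v : V) (k : ℕ) {τ : ℝ} (hτ : 0 ≤ τ) :
    tailMass Q v k τ ≤ 1 := by
  have := Finset.sum_nonneg (s := Finset.range k) (fun j _ => (hQ.1 v j τ hτ).1)
  simp only [tailMass]
  linarith

lemma gammaFn_eq_tail (τ : ℝ) :
    gammaFn β p Q τ = ∑ v, β v * p v * tailMass Q v 1 τ := by
  simp [gammaFn, tailMass]

lemma gammaFn_nonneg (hβ : ∀ v, 0 < β v) (hp : ∀ v, 0 < p v) (hQ : IsMFSolution β p lam Q)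
    {τ : ℝ} (hτ : 0 ≤ τ) : 0 ≤ gammaFn β p Q τ := by
  rw [gammaFn_eq_tail]
  exact Finset.sum_nonneg fun v _ =>
    mul_nonneg (mul_pos (hβ v) (hp v)).le (tailMass_nonneg hQ v 1 hτ)

lemma tailMass_hasDerivWithinAt (hQ : IsMFSolution β p lam Q) (v : V) (k : ℕ) {τ : ℝ}
    (hτ : 0 ≤ τ) :
    HasDerivWithinAt (tailMass Q v k) (tailDeriv β p lam Q v k τ) (Ici 0) τ := by
  cases k with
  | zero =>
    have : tailMass Q v 0 = fun _ => (1 : ℝ) := funext fun τ => tailMass_zero v τ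
    rw [this]
    exact hasDerivWithinAt_const _ _ _
  | succ n =>
    induction n with
    | zero =>
      have h := (hQ.2.2 v 0 τ hτ).const_sub 1
      have e : tailMass Q v (0 + 1) = fun τ => 1 - Q v 0 τ := by
        funext t; simp [tailMass]
      rw [e]
      refine h.congr_deriv ?_
      simp only [tailDeriv, tailMass_sub_succ]
      simp
      ring
    | succ n ih =>
      have h := ih.sub (hQ.2.2 v (n + 1) τ hτ)
      have e : tailMass Q v (n + 1 + 1) = tailMass Q v (n + 1) - Q v (n + 1) := by
        funext t
        have := tailMass_sub_succ (Q := Q) v (n + 1) t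
        simp only [Pi.sub_apply]
        linarith
      rw [e]
      refine h.congr_deriv ?_
      simp only [tailDeriv, tailMass_sub_succ]
      simp
      ring

lemma exp_neg_sub_le {a b d : ℝ} (ha : 0 ≤ a) (hd : 0 ≤ d) (hb : b ≤ a + d) :
    Real.exp (-a) - Real.exp (-b) ≤ d := by
  have h1 : Real.exp (-(a + d)) ≤ Real.exp (-b) := Real.exp_le_exp.2 (by linarith)
  have h2 : Real.exp (-(a + d)) = Real.exp (-a) * Real.exp (-d) := by
    rw [← Real.exp_add]; ring_nf
  have h3 : 1 - d ≤ Real.exp (-d) := by linarith [Real.add_one_le_exp (-d)]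
  have h4 : Real.exp (-a) ≤ 1 := Real.exp_le_one_iff.2 (by linarith)
  have h5 := Real.exp_pos (-a)
  nlinarith [mul_le_mul_of_nonneg_left h3 h5.le]

/-- Comparison of the tails with the stationary geometric tails, by a first-crossing argument
against the supersolution `ρ_v ^ k + ε e^{Kτ} (k + 1)`.  Here `c` is the stationary value of `γ`. -/
lemma tail_le_geometric (hβ : ∀ v, 0 < β v) (hp : ∀ v, 0 < p v) (hlam : ∀ v, 0 < lam v)
    (hQ : IsMFSolution β p lam Q)
    (hempty : ∀ v, ∀ k : ℕ, Q v k 0 = if k = 0 then 1 else 0)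
    {c : ℝ} (hc : 0 ≤ c) (ρ : V → ℝ) (hρ0 : ∀ v, 0 ≤ ρ v) (hρ1 : ∀ v, ρ v ≤ 1)
    (hρ : ∀ v, lam v = p v * Real.exp (-c) * ρ v) (hsum : ∑ v, β v * p v * ρ v = c)
    (v : V) (k : ℕ) {τ : ℝ} (hτ : 0 ≤ τ) : tailMass Q v k τ ≤ ρ v ^ k := by
  set ζ := ∑ v, β v * p v with hζ
  have hζ0 : 0 ≤ ζ := Finset.sum_nonneg fun v _ => (mul_pos (hβ v) (hp v)).le
  set K := (∑ v, p v) * (2 * ζ + 1) with hK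
  have hpK : ∀ v, p v * (2 * ζ + 1) ≤ K := fun v =>
    mul_le_mul_of_nonneg_right
      (Finset.single_le_sum (fun w _ => (hp w).le) (Finset.mem_univ v)) (by positivity)
  have hKpos : 0 < K := lt_of_lt_of_le (mul_pos (hp v) (by positivity)) (hpK v)
  have main : ∀ ε : ℝ, 0 < ε → ∀ i : V × ℕ, ∀ τ, 0 ≤ τ →
      0 < ε * Real.exp (K * τ) * ((i.2 : ℝ) + 1) - (tailMass Q i.1 i.2 τ - ρ i.1 ^ i.2) := by
    intro ε hε
    obtain ⟨N, hN⟩ := exists_nat_gt (1 / ε)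
    have hN' : 1 < ε * N := by
      rwa [div_lt_iff₀ hε, mul_comm] at hN
    refine pos_of_no_crossing (Finset.univ ×ˢ Finset.range N)
      (fun (i : V × ℕ) τ =>
        ε * Real.exp (K * τ) * ((i.2 : ℝ) + 1) - (tailMass Q i.1 i.2 τ - ρ i.1 ^ i.2))
      (fun (i : V × ℕ) τ =>
        ε * Real.exp (K * τ) * K * ((i.2 : ℝ) + 1) - tailDeriv β p lam Q i.1 i.2 τ) ?_ ?_ ?_ ?_
    · rintro ⟨w, n⟩ hn t ht
      simp only [Finset.mem_product, Finset.mem_univ, Finset.mem_range, true_and, not_lt] at hn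
      have h1 := tailMass_le_one hQ w n ht
      have h2 : 0 ≤ ρ w ^ n := pow_nonneg (hρ0 w) n
      have h3 : (N : ℝ) ≤ n := by exact_mod_cast hn
      have h4 : 1 ≤ Real.exp (K * t) := Real.one_le_exp (by positivity)
      have h5 : ε * N ≤ ε * Real.exp (K * t) * ((n : ℝ) + 1) := by
        have : ε ≤ ε * Real.exp (K * t) := le_mul_of_one_le_right hε.le h4
        exact mul_le_mul this (by linarith) (by positivity) (by positivity)
      dsimp only
      linarith
    · rintro ⟨w, n⟩
      have h2 : tailMass Q w n 0 ≤ ρ w ^ n := by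
        cases n with
        | zero => simp [tailMass_zero]
        | succ n =>
          have h3 : tailMass Q w (n + 1) 0 = 0 := by
            simp [tailMass, hempty]
          rw [h3]
          exact pow_nonneg (hρ0 w) _
      have h4 : 0 < ε * Real.exp (K * 0) * ((n : ℝ) + 1) := by positivity
      dsimp only
      linarith
    · rintro ⟨w, n⟩ t ht
      have h1 : HasDerivAt (fun t => ε * Real.exp (K * t) * ((n : ℝ) + 1))
          (ε * Real.exp (K * t) * K * ((n : ℝ) + 1)) t := by
        have h := ((((hasDerivAt_id t).const_mul K).exp).const_mul ε).mul_const ((n : ℝ) + 1)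
        refine h.congr_deriv ?_
        simp only [id]
        ring
      exact h1.hasDerivWithinAt.sub ((tailMass_hasDerivWithinAt hQ w n ht).sub_const _)
    · rintro ⟨w, n⟩ t ht hnn hz
      set X := ε * Real.exp (K * t) with hX
      have hXpos : 0 < X := by positivity
      cases n with
      | zero =>
        simp only [tailMass_zero, pow_zero, Nat.cast_zero] at hz
        linarith
      | succ n =>
        have a0 := hnn (w, n)
        have a2 := hnn (w, n + 2)
        dsimp only at a0 a2 hz
        push_cast at a0 a2 hz
        -- The bounds on `S_{u,1}` at time `t` control `γ(t)` from above.
        have hγ : gammaFn β p Q t ≤ c + 2 * ζ * X := by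
          rw [gammaFn_eq_tail, ← hsum, hζ, Finset.mul_sum, Finset.sum_mul,
            ← Finset.sum_add_distrib]
          refine Finset.sum_le_sum fun u _ => ?_
          have a1 := hnn (u, 1)
          dsimp only at a1
          push_cast at a1
          rw [pow_one] at a1
          have := mul_le_mul_of_nonneg_left
            (show tailMass Q u 1 t ≤ ρ u + 2 * X by linarith) (mul_pos (hβ u) (hp u)).le
          linarith
        have hexp := exp_neg_sub_le hc (by positivity : (0:ℝ) ≤ 2 * ζ * X) hγ
        have hγ0 := gammaFn_nonneg hβ hp hQ ht.le
        have he1 : Real.exp (-(gammaFn β p Q t)) ≤ 1 := Real.exp_le_one_iff.2 (by linarith)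
        have he0 := Real.exp_pos (-(gammaFn β p Q t))
        set e := Real.exp (-(gammaFn β p Q t))
        set G := ρ w ^ (n + 1) - ρ w ^ (n + 2) with hG
        have hG0 : 0 ≤ G := sub_nonneg.2 (pow_le_pow_of_le_one (hρ0 w) (hρ1 w) (by omega))
        have hG1 : G ≤ 1 := by
          have := pow_le_one₀ (n := n + 1) (hρ0 w) (hρ1 w)
          have := pow_nonneg (hρ0 w) (n + 2)
          linarith
        have hstat : lam w * (ρ w ^ n - ρ w ^ (n + 1)) = p w * Real.exp (-c) * G := by
          rw [hρ w, hG]; ring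
        have b1 : lam w * (tailMass Q w n t - tailMass Q w (n + 1) t)
            ≤ p w * Real.exp (-c) * G := by
          rw [← hstat]
          exact mul_le_mul_of_nonneg_left (by linarith) (hlam w).le
        have b2 : p w * e * (G - X)
            ≤ p w * e * (tailMass Q w (n + 1) t - tailMass Q w (n + 2) t) :=
          mul_le_mul_of_nonneg_left (by linarith) (mul_pos (hp w) he0).le
        have b3 : p w * ((Real.exp (-c) - e) * G) ≤ p w * (2 * ζ * X) := by
          refine mul_le_mul_of_nonneg_left ?_ (hp w).le
          have h0 : (0:ℝ) ≤ 2 * ζ * X := by positivity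
          calc (Real.exp (-c) - e) * G ≤ 2 * ζ * X * G := mul_le_mul_of_nonneg_right hexp hG0
            _ ≤ 2 * ζ * X := mul_le_of_le_one_right h0 hG1
        have b4 : p w * e * X ≤ p w * X :=
          mul_le_mul_of_nonneg_right (mul_le_of_le_one_right (hp w).le he1) hXpos.le
        have b5 : X * (p w * (2 * ζ + 1)) ≤ X * K := mul_le_mul_of_nonneg_left (hpK w) hXpos.le
        have b6 : 0 < X * K * ((n : ℝ) + 1) := by positivity
        simp only [tailDeriv]
        push_cast
        linarith
  -- Let `ε → 0`.
  refine le_of_forall_pos_lt_add fun δ hδ => ?_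
  have hpos : 0 < Real.exp (K * τ) * ((k : ℝ) + 1) := by positivity
  have := main (δ / (Real.exp (K * τ) * ((k : ℝ) + 1))) (by positivity) (v, k) τ hτ
  dsimp only at this
  rw [mul_assoc, div_mul_cancel₀ _ hpos.ne'] at this
  linarith

/-! ### Drift of the truncated mean queue length -/

lemma sum_tailDeriv (v : V) (N : ℕ) (τ : ℝ) :
    ∑ k ∈ Finset.range N, tailDeriv β p lam Q v (k + 1) τ
      = lam v * (1 - tailMass Q v N τ)
        - p v * Real.exp (-(gammaFn β p Q τ)) * (tailMass Q v 1 τ - tailMass Q v (N + 1) τ) := by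
  induction N with
  | zero => simp [tailMass_zero]
  | succ N ih =>
    rw [Finset.sum_range_succ, ih]
    simp only [tailDeriv]
    ring

lemma gammaFn_continuousOn (hQ : IsMFSolution β p lam Q) :
    ContinuousOn (gammaFn β p Q) (Ici 0) := by
  unfold gammaFn
  refine continuousOn_finsetSum _ fun v _ => ?_
  exact continuousOn_const.mul (continuousOn_const.sub
    fun τ hτ => (hQ.2.2 v 0 τ hτ).continuousWithinAt)

/-- Integrating the drift of the truncated mean queue length, which the geometric tails bound
uniformly in the truncation level and in time. -/
lemma integral_le_bound (hβ : ∀ v, 0 < β v) (hp : ∀ v, 0 < p v) (hlam : ∀ v, 0 < lam v)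
    (hQ : IsMFSolution β p lam Q) (ρ : V → ℝ) (hρ0 : ∀ v, 0 ≤ ρ v) (hρ1 : ∀ v, ρ v < 1)
    (hle : ∀ v k τ, 0 ≤ τ → tailMass Q v k τ ≤ ρ v ^ k) {T : ℝ} (hT : 0 ≤ T) :
    ∫ u in (0:ℝ)..T, ((∑ v, β v * lam v)
        - gammaFn β p Q u * Real.exp (-(gammaFn β p Q u)))
      ≤ ∑ v, β v * (1 - ρ v)⁻¹ := by
  set f : ℝ → ℝ := fun u => (∑ v, β v * lam v)
        - gammaFn β p Q u * Real.exp (-(gammaFn β p Q u)) with hf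
  have hfc : ContinuousOn f (Icc 0 T) := by
    have h := (gammaFn_continuousOn hQ).mono (Icc_subset_Ici_self : Icc 0 T ⊆ Ici 0)
    exact continuousOn_const.sub (h.mul h.neg.rexp)
  have hfi : IntervalIntegrable f MeasureTheory.volume 0 T :=
    ContinuousOn.intervalIntegrable (by rwa [uIcc_of_le hT])
  have key : ∀ N : ℕ, ∫ u in (0:ℝ)..T, f u
      ≤ (∑ v, β v * (1 - ρ v)⁻¹) + T * ∑ v, β v * lam v * ρ v ^ N := by
    intro N
    set C := ∑ v, β v * lam v * ρ v ^ N with hC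
    set m : ℝ → ℝ := fun τ => ∑ v, β v * ∑ k ∈ Finset.range N, tailMass Q v (k + 1) τ with hm
    have hmd : ∀ τ, 0 ≤ τ → HasDerivWithinAt m
        (∑ v, β v * ∑ k ∈ Finset.range N, tailDeriv β p lam Q v (k + 1) τ) (Ici 0) τ := by
      intro τ hτ
      refine HasDerivWithinAt.fun_sum fun v _ => ?_
      refine HasDerivWithinAt.const_mul _ ?_
      exact HasDerivWithinAt.fun_sum fun k _ => tailMass_hasDerivWithinAt hQ v (k + 1) hτ
    have h1 : ∫ u in (0:ℝ)..T, (f u - C) ≤ m T - m 0 := by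
      refine intervalIntegral.integral_le_sub_of_hasDeriv_right_of_le hT
        (fun τ hτ => ((hmd τ hτ.1).mono Icc_subset_Ici_self).continuousWithinAt)
        (fun τ hτ => (hmd τ hτ.1.le).mono
          (fun x hx => le_trans hτ.1.le (le_of_lt hx)))
        (hfc.sub continuousOn_const).integrableOn_Icc ?_
      intro τ hτ
      rw [hf, hC]
      dsimp only
      rw [gammaFn_eq_tail τ, Finset.sum_mul, ← Finset.sum_sub_distrib, ← Finset.sum_sub_distrib]
      refine Finset.sum_le_sum fun v _ => ?_
      rw [sum_tailDeriv, gammaFn_eq_tail τ]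
      have h2 := mul_le_mul_of_nonneg_left (hle v N τ hτ.1.le) (mul_pos (hβ v) (hlam v)).le
      have h3 : 0 ≤ β v * p v * Real.exp (-∑ v, β v * p v * tailMass Q v 1 τ)
          * tailMass Q v (N + 1) τ :=
        mul_nonneg (mul_pos (mul_pos (hβ v) (hp v)) (Real.exp_pos _)).le
          (tailMass_nonneg hQ v (N + 1) hτ.1.le)
      linarith
    have h2 : ∫ u in (0:ℝ)..T, (f u - C) = (∫ u in (0:ℝ)..T, f u) - T * C := by
      rw [intervalIntegral.integral_sub hfi intervalIntegrable_const]
      simp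
    have h3 : 0 ≤ m 0 := Finset.sum_nonneg fun v _ => mul_nonneg (hβ v).le
      (Finset.sum_nonneg fun k _ => tailMass_nonneg hQ v _ le_rfl)
    have h4 : m T ≤ ∑ v, β v * (1 - ρ v)⁻¹ := by
      refine Finset.sum_le_sum fun v _ => mul_le_mul_of_nonneg_left ?_ (hβ v).le
      calc ∑ k ∈ Finset.range N, tailMass Q v (k + 1) T
          ≤ ∑ k ∈ Finset.range N, ρ v ^ k := Finset.sum_le_sum fun k _ =>
            (hle v (k + 1) T hT).trans
              (pow_le_pow_of_le_one (hρ0 v) (hρ1 v).le (Nat.le_succ k))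
        _ ≤ (1 - ρ v)⁻¹ := sum_le_hasSum _ (fun k _ => pow_nonneg (hρ0 v) k)
            (hasSum_geometric_of_lt_one (hρ0 v) (hρ1 v))
    linarith
  have hlim : Tendsto (fun N : ℕ => (∑ v, β v * (1 - ρ v)⁻¹) + T * ∑ v, β v * lam v * ρ v ^ N)
      atTop (𝓝 ((∑ v, β v * (1 - ρ v)⁻¹) + T * ∑ v, β v * lam v * 0)) := by
    refine tendsto_const_nhds.add (tendsto_const_nhds.mul (tendsto_finsetSum _ fun v _ => ?_))
    exact tendsto_const_nhds.mul (tendsto_pow_atTop_nhds_zero_of_lt_one (hρ0 v) (hρ1 v))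
  have := ge_of_tendsto' hlim key
  simpa using this

end Tails

/-! ### The bound on `γ` and integrability -/

/-- `x ↦ x e^{-x}` is increasing on `[0, 1]`. -/
lemma mul_exp_neg_le {a b : ℝ} (ha : 0 ≤ a) (hab : a ≤ b) (hb : b ≤ 1) :
    a * Real.exp (-a) ≤ b * Real.exp (-b) := by
  have h1 : Real.exp (-b) = Real.exp (-a) * Real.exp (-(b - a)) := by
    rw [← Real.exp_add]; ring_nf
  have h2 := Real.add_one_le_exp (-(b - a))
  -- `b (1 - (b - a)) - a = (b - a) (1 - b) ≥ 0`.
  have h4 : a ≤ b * Real.exp (-(b - a)) := by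
    have h5 := mul_le_mul_of_nonneg_left h2 (ha.trans hab)
    nlinarith [mul_nonneg (sub_nonneg.2 hab) (sub_nonneg.2 hb)]
  rw [h1]
  calc a * Real.exp (-a) ≤ b * Real.exp (-(b - a)) * Real.exp (-a) :=
        mul_le_mul_of_nonneg_right h4 (Real.exp_pos _).le
    _ = b * (Real.exp (-a) * Real.exp (-(b - a))) := by ring

/-- Proposition 2: for a solution of the mean-field slotted-Aloha system
started from the empty state, under the stability conditions `0 < λ̄ < e⁻¹`,
`ζ < γ̄(λ̄)` and `λ_v < p_v e^{−γ̲(λ̄)}`, one has `γ(τ) ≤ γ̲(λ̄)` for all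
`τ ≥ 0`, the function `f(τ) = γ̲ e^{−γ̲} − γ(τ) e^{−γ(τ)}` is nonnegative, and
`∫_0^∞ f(u) du < ∞`. -/
theorem aloha_meanfield_fast_convergence
    {V : Type*} [Fintype V] [Nonempty V]
    (β p lam : V → ℝ)
    (hβ : ∀ v, 0 < β v) (hp : ∀ v, 0 < p v) (hlam : ∀ v, 0 < lam v)
    (hβsum : ∑ v, β v = 1)
    (lamBar ζ : ℝ)
    (hlamBar : lamBar = ∑ v, β v * lam v)
    (hζdef : ζ = ∑ v, β v * p v)
    (hpos : 0 < lamBar) (hsub : lamBar < Real.exp (-1))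
    (γlo γhi : ℝ)
    (hγlo_mem : γlo ∈ Set.Ioo (0:ℝ) 1) (hγlo_root : γlo * Real.exp (-γlo) = lamBar)
    (hγhi_mem : γhi ∈ Set.Ioi (1:ℝ)) (hγhi_root : γhi * Real.exp (-γhi) = lamBar)
    (hζ : ζ < γhi)
    (hstab : ∀ v, lam v < p v * Real.exp (-γlo))
    (Q : V → ℕ → ℝ → ℝ) (hQ : IsMFSolution β p lam Q)
    (hempty : ∀ v, ∀ k : ℕ, Q v k 0 = if k = 0 then 1 else 0) :
    (∀ τ, 0 ≤ τ → gammaFn β p Q τ ≤ γlo) ∧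
    (∀ τ, 0 ≤ τ →
      0 ≤ γlo * Real.exp (-γlo) - gammaFn β p Q τ * Real.exp (-(gammaFn β p Q τ))) ∧
    (∫⁻ u in Set.Ici (0:ℝ),
        ENNReal.ofReal (γlo * Real.exp (-γlo)
          - gammaFn β p Q u * Real.exp (-(gammaFn β p Q u))) < ⊤) := by
  set ρ : V → ℝ := fun v => lam v / (p v * Real.exp (-γlo)) with hρdef
  have hden : ∀ v, 0 < p v * Real.exp (-γlo) := fun v => mul_pos (hp v) (Real.exp_pos _)
  have hρ0 : ∀ v, 0 ≤ ρ v := fun v => (div_pos (hlam v) (hden v)).le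
  have hρ1 : ∀ v, ρ v < 1 := fun v => (div_lt_one (hden v)).2 (hstab v)
  have hρ : ∀ v, lam v = p v * Real.exp (-γlo) * ρ v := fun v =>
    (mul_div_cancel₀ _ (hden v).ne').symm
  have hsum : ∑ v, β v * p v * ρ v = γlo := by
    have h : (∑ v, β v * p v * ρ v) * Real.exp (-γlo) = γlo * Real.exp (-γlo) := by
      rw [hγlo_root, hlamBar, Finset.sum_mul]
      refine Finset.sum_congr rfl fun v _ => ?_
      rw [hρ v]
      ring
    exact mul_right_cancel₀ (Real.exp_pos _).ne' h
  have htail : ∀ v k τ, 0 ≤ τ → tailMass Q v k τ ≤ ρ v ^ k := fun v k τ hτ =>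
    tail_le_geometric hβ hp hlam hQ hempty hγlo_mem.1.le ρ hρ0 (fun v => (hρ1 v).le) hρ hsum v k hτ
  have hγ : ∀ τ, 0 ≤ τ → gammaFn β p Q τ ≤ γlo := by
    intro τ hτ
    rw [gammaFn_eq_tail, ← hsum]
    refine Finset.sum_le_sum fun v _ => mul_le_mul_of_nonneg_left ?_ (mul_pos (hβ v) (hp v)).le
    simpa using htail v 1 τ hτ
  have hf : ∀ τ, 0 ≤ τ →
      0 ≤ γlo * Real.exp (-γlo) - gammaFn β p Q τ * Real.exp (-(gammaFn β p Q τ)) := fun τ hτ =>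
    sub_nonneg.2 (mul_exp_neg_le (gammaFn_nonneg hβ hp hQ hτ) (hγ τ hτ) hγlo_mem.2.le)
  refine ⟨hγ, hf, ?_⟩
  set f : ℝ → ℝ := fun u =>
    γlo * Real.exp (-γlo) - gammaFn β p Q u * Real.exp (-(gammaFn β p Q u)) with hfdef
  have hfc : ContinuousOn f (Ici 0) :=
    continuousOn_const.sub ((gammaFn_continuousOn hQ).mul (gammaFn_continuousOn hQ).neg.rexp)
  have hint : MeasureTheory.IntegrableOn f (Ioi 0) := by
    refine MeasureTheory.integrableOn_Ioi_of_intervalIntegral_norm_bounded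
      (∑ v, β v * (1 - ρ v)⁻¹) 0 (b := fun T : ℝ => T) (l := atTop) ?_ tendsto_id ?_
    · intro T
      exact ((hfc.mono Icc_subset_Ici_self).integrableOn_Icc).mono_set Ioc_subset_Icc_self
    · filter_upwards [eventually_ge_atTop (0:ℝ)] with T hT
      have h := integral_le_bound hβ hp hlam hQ ρ hρ0 hρ1 htail hT
      rw [← hlamBar, ← hγlo_root] at h
      refine le_trans (le_of_eq ?_) h
      refine intervalIntegral.integral_congr fun u hu => ?_
      rw [uIcc_of_le hT] at hu
      exact Real.norm_of_nonneg (hf u hu.1)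
  have hint' : MeasureTheory.IntegrableOn f (Ici 0) := by
    rwa [integrableOn_Ici_iff_integrableOn_Ioi]
  exact MeasureTheory.Integrable.lintegral_lt_top hint'
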